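/- Let G be a one-sided complete-observation turn-based stochastic game satisfying interaction separation with uniform-n-ary probabilistic states (as in the context), let f : A₁ → ZMod n and g : A₂ → ZMod n be surjective, and let (G', φ') be the derandomized game and objective obtained from (G, φ). Then for every measurable objective φ ⊆ S^ω and every state s ∈ S, val^G(φ)(s) = val^{G'}(φ')(s); moreover player 1 has an observation-based optimal strategy for φ from s in G if and only if player 1 has an observation-based optimal strategy for φ' from s in G'. -/

import Mathlib

open MeasureTheory
open scoped ENNReal

namespace Stmt5

/-- Type of a state: player-1 state, player-2 state, or probabilistic state. -/
inductive Turn : Type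
  | p1 : Turn
  | p2 : Turn
  | prob : Turn
deriving DecidableEq

variable {S A₁ A₂ O : Type}

/-- The cylinder set of infinite plays extending the finite prefix `l`. -/
def Cyl {α : Type} (l : List α) : Set (ℕ → α) := {ρ | ∀ i : Fin l.length, ρ i.1 = l.get i}

/-- Probability of observing the successive states `rest` after the history `hist ++ [cur]`,
given the one-step transition probability `step`. -/
noncomputable def listProb {α : Type} (step : List α → α → α → ℝ≥0∞) :
    List α → α → List α → ℝ≥0∞
  | _, _, [] => 1
  | hist, cur, s' :: rest => step hist cur s' * listProb step (hist ++ [cur]) s' rest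

/-- One-step transition probability of the turn-based game `G`: at player-1 states the
action of player 1 (drawn from `σ`) determines the successor via `δ₁`, at player-2 states
the action of player 2 (drawn from `π`) determines it via `δ₂`, and at probabilistic
states with successor tuple `succ cur : ZMod n → S` each successor is reached with
probability `#{k | succ cur k = next}/n` (independently of the actions). -/
noncomputable def stepG [DecidableEq S] [Fintype A₁] [Fintype A₂] (n : ℕ) [NeZero n]
    (turn : S → Turn) (δ₁ : S → A₁ → S) (δ₂ : S → A₂ → S) (succ : S → ZMod n → S)
    (σ : List S → PMF A₁) (π : List S → PMF A₂)
    (hist : List S) (cur next : S) : ℝ≥0∞ :=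
  match turn cur with
  | Turn.p1 => ∑' a, σ (hist ++ [cur]) a * (if δ₁ cur a = next then 1 else 0)
  | Turn.p2 => ∑' b, π (hist ++ [cur]) b * (if δ₂ cur b = next then 1 else 0)
  | Turn.prob =>
      ((Finset.univ.filter fun k : ZMod n => succ cur k = next).card : ℝ≥0∞) / (n : ℝ≥0∞)

/-- `Pr` is the family of Ionescu–Tulcea play measures of the game with one-step
transition probabilities `step σ π`. -/
def IsPlayMeasure {α : Type} [MeasurableSpace α]
    (step : (List α → PMF A₁) → (List α → PMF A₂) → List α → α → α → ℝ≥0∞)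
    (Pr : α → (List α → PMF A₁) → (List α → PMF A₂) → Measure (ℕ → α)) : Prop :=
  (∀ s σ π, IsProbabilityMeasure (Pr s σ π)) ∧
    ∀ s σ π (l : List α), Pr s σ π (Cyl (s :: l)) = listProb (step σ π) [] s l

/-- An observation-based strategy only depends on the observation sequence. -/
def ObsBased {α A O : Type} (obs : α → O) (σ : List α → PMF A) : Prop :=
  ∀ h h' : List α, h.map obs = h'.map obs → σ h = σ h'

/-- State space of the derandomized game `G'`. -/
abbrev S' (S : Type) (n : ℕ) : Type := S ⊕ S × ZMod n

/-- Turn function of `G'`: probabilistic states of `G` become player-2 states, and the new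
states `(s, i)` are player-1 states. -/
def turn' (turn : S → Turn) {n : ℕ} : S' S n → Turn
  | Sum.inl s => match turn s with
    | Turn.prob => Turn.p2
    | t => t
  | Sum.inr _ => Turn.p1

/-- Player-1 transitions of `G'`: unchanged on `S₁`; from `(s, i)` the action `a` leads to
the entry of the successor tuple of `s` at index `i + f a`. -/
def delta₁' (δ₁ : S → A₁ → S) {n : ℕ} (succ : S → ZMod n → S) (f : A₁ → ZMod n) :
    S' S n → A₁ → S' S n
  | Sum.inl s, a => Sum.inl (δ₁ s a)
  | Sum.inr (s, i), a => Sum.inl (succ s (i + f a))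

/-- Player-2 transitions of `G'`: unchanged on `S₂`; from a probabilistic state `s` of `G`
the action `b` leads to `(s, g b)`. -/
def delta₂' [DecidableEq Turn] (turn : S → Turn) (δ₂ : S → A₂ → S) {n : ℕ}
    (g : A₂ → ZMod n) : S' S n → A₂ → S' S n
  | Sum.inl s, b => if turn s = Turn.prob then Sum.inr (s, g b) else Sum.inl (δ₂ s b)
  | Sum.inr (s, i), _ => Sum.inr (s, i)

/-- One-step transition probability of the (deterministic) derandomized game `G'`. -/
noncomputable def stepG' [DecidableEq S] [Fintype A₁] [Fintype A₂] (n : ℕ) [NeZero n]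
    (turn : S → Turn) (δ₁ : S → A₁ → S) (δ₂ : S → A₂ → S) (succ : S → ZMod n → S)
    (f : A₁ → ZMod n) (g : A₂ → ZMod n)
    (σ : List (S' S n) → PMF A₁) (π : List (S' S n) → PMF A₂)
    (hist : List (S' S n)) (cur next : S' S n) : ℝ≥0∞ :=
  match turn' turn cur with
  | Turn.p1 => ∑' a, σ (hist ++ [cur]) a *
      (if delta₁' δ₁ succ f cur a = next then 1 else 0)
  | Turn.p2 => ∑' b, π (hist ++ [cur]) b *
      (if delta₂' turn δ₂ g cur b = next then 1 else 0)
  | Turn.prob => 0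

/-- Projection of `G'`-states to `G`-states. -/
def unbar {n : ℕ} : S' S n → S
  | Sum.inl s => s
  | Sum.inr (s, _) => s

/-- Observation map of `G'`: `(s, i)` is observed like `s`. -/
def obs' (obs₁ : S → O) {n : ℕ} : S' S n → O := fun s => obs₁ (unbar s)

/-- The derandomized objective `φ'`: the subsequence of states in `S` (i.e. not in
`S_P × ZMod n`) is infinite and belongs to `φ`. -/
def phi' {n : ℕ} (φ : Set (ℕ → S)) : Set (ℕ → S' S n) :=
  {ρ | {m | (ρ m).isLeft = true}.Infinite ∧
    (fun k => unbar (ρ (Nat.nth (fun m => (ρ m).isLeft = true) k))) ∈ φ}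

/-! ### Generic facts about play measures -/

/-- The list of the first `m` states of a play. -/
def hst {α : Type} (m : ℕ) (x : ℕ → α) : List α := (List.range m).map x

theorem hst_succ {α : Type} (m : ℕ) (x : ℕ → α) : hst (m+1) x = hst m x ++ [x m] := by
  simp [hst, List.range_succ]

theorem hst_congr {α : Type} {m : ℕ} {x y : ℕ → α} (h : ∀ i < m, x i = y i) :
    hst m x = hst m y := by
  unfold hst
  apply List.map_congr_left
  intro i hi
  exact h i (List.mem_range.1 hi)

/-- Plays agreeing with `x` up to time `m`. -/
def CC {α : Type} (m : ℕ) (x : ℕ → α) : Set (ℕ → α) := {y | ∀ i < m + 1, y i = x i}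

/-- `μ` is a play measure. -/
def PM {α : Type} [MeasurableSpace α] (step : List α → α → α → ℝ≥0∞) (s : α)
    (μ : Measure (ℕ → α)) : Prop :=
  IsProbabilityMeasure μ ∧ ∀ l, μ (Cyl (s :: l)) = listProb step [] s l

theorem listProb_hst {α : Type} (step : List α → α → α → ℝ≥0∞) (x : ℕ → α) (m k : ℕ) :
    listProb step (hst k x) (x k) ((List.range m).map (fun i => x (k + 1 + i))) =
      ∏ i ∈ Finset.range m, step (hst (k + i) x) (x (k + i)) (x (k + i + 1)) := by
  induction m generalizing k with
  | zero => simp [listProb]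
  | succ m ih =>
    rw [List.range_succ_eq_map, List.map_cons, listProb, Finset.prod_range_succ', mul_comm]
    rw [← hst_succ]
    have := ih (k+1)
    simp only [List.map_map, Function.comp_def, Nat.succ_eq_add_one]
    congr 1
    rw [show (fun i => x (k + 1 + (i + 1))) = (fun i => x (k + 1 + 1 + i)) by
      funext i; congr 1; omega]
    simp only [add_zero] at *
    rw [this]
    refine Finset.prod_congr rfl fun i _ => ?_
    rw [show k + 1 + i = k + (i+1) by omega]

theorem cyl_eq {α : Type} (x : ℕ → α) (m : ℕ) :
    Cyl (x 0 :: (List.range m).map (fun i => x (0 + 1 + i))) = CC m x := by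
  ext y
  simp only [Cyl, CC, Set.mem_ofPred_eq]
  constructor
  · intro h i hi
    have := h ⟨i, by simpa using hi⟩
    rw [this]
    cases i <;> simp [add_comm]
  · rintro h ⟨i, hi⟩
    rw [h i (by simpa using hi)]
    cases i <;> simp [add_comm]

theorem PM.zero {α : Type} [MeasurableSpace α] [MeasurableSingletonClass α]
    {step : List α → α → α → ℝ≥0∞} {s : α}
    {μ : Measure (ℕ → α)} (h : PM step s μ) : ∀ᵐ y ∂μ, y 0 = s := by
  have := h.1
  have h2 := h.2 []
  simp only [listProb] at h2
  rw [← prob_compl_eq_zero_iff] at h2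
  · rw [ae_iff]
    convert h2 using 2
    ext y; simp [Cyl]
  · have : Cyl [s] = (fun y : ℕ → α => y 0) ⁻¹' {s} := by ext y; simp [Cyl]
    rw [this]
    exact measurable_pi_apply 0 (measurableSet_singleton s)

theorem PM.cc {α : Type} [MeasurableSpace α]
    {step : List α → α → α → ℝ≥0∞} {s : α}
    {μ : Measure (ℕ → α)} (h : PM step s μ) (x : ℕ → α) (hx : x 0 = s) (m : ℕ) :
    μ (CC m x) = ∏ i ∈ Finset.range m, step (hst i x) (x i) (x (i + 1)) := by
  have := listProb_hst step x m 0
  rw [← cyl_eq, hx, h.2, ← hx]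
  simpa [hst] using this

theorem PM.cc_ne {α : Type} [MeasurableSpace α] [MeasurableSingletonClass α]
    {step : List α → α → α → ℝ≥0∞} {s : α}
    {μ : Measure (ℕ → α)} (h : PM step s μ) (x : ℕ → α) (hx : x 0 ≠ s) (m : ℕ) :
    μ (CC m x) = 0 := by
  refine measure_mono_null ?_ (ae_iff.1 h.zero)
  intro y hy
  have := hy 0 (by omega)
  simp [this, hx]

theorem PM.cc_succ {α : Type} [MeasurableSpace α] [MeasurableSingletonClass α]
    {step : List α → α → α → ℝ≥0∞} {s : α}
    {μ : Measure (ℕ → α)} (h : PM step s μ) (x : ℕ → α) (m : ℕ) :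
    μ (CC (m+1) x) = μ (CC m x) * step (hst m x) (x m) (x (m+1)) := by
  by_cases hx : x 0 = s
  · rw [h.cc x hx, h.cc x hx, Finset.prod_range_succ]
  · rw [h.cc_ne x hx, h.cc_ne x hx, zero_mul]

/-- Prefix map. -/
def pre {α : Type} (m : ℕ) (x : ℕ → α) : Fin m → α := fun i => x i

theorem pre_meas {α : Type} [MeasurableSpace α] (m : ℕ) : Measurable (pre (α := α) m) :=
  measurable_pi_lambda _ fun _ => measurable_pi_apply _

theorem pre_singleton {α : Type} (m : ℕ) (x : ℕ → α) :
    pre (m+1) ⁻¹' {pre (m+1) x} = CC m x := by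
  ext y
  simp only [Set.mem_preimage, Set.mem_singleton_iff, funext_iff, pre, CC, Set.mem_ofPred_eq]
  exact ⟨fun h i hi => h ⟨i, hi⟩, fun h i => h i i.2⟩

theorem pre_surj {α : Type} [Nonempty α] (m : ℕ) : Function.Surjective (pre (α := α) m) := by
  intro w
  refine ⟨fun i => if h : i < m then w ⟨i, h⟩ else Classical.arbitrary α, ?_⟩
  funext i
  simp [pre]

/-- A set determined by the first `m + 1` coordinates. -/
def Det {α : Type} (m : ℕ) (E : Set (ℕ → α)) : Prop :=
  ∀ x y, (∀ i < m + 1, x i = y i) → x ∈ E → y ∈ E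

theorem Det.eq {α : Type} {m : ℕ} {E : Set (ℕ → α)} (h : Det m E) :
    E = pre (m+1) ⁻¹' (pre (m+1) '' E) := by
  apply Set.Subset.antisymm (Set.subset_preimage_image _ _)
  rintro y ⟨x, hx, hxy⟩
  exact h x y (fun i hi => congrFun hxy ⟨i, hi⟩) hx

theorem Det.meas {α : Type} [Finite α] [MeasurableSpace α] [MeasurableSingletonClass α]
    {m : ℕ} {E : Set (ℕ → α)} (h : Det m E) : MeasurableSet E := by
  rw [h.eq]
  exact pre_meas _ (Set.toFinite _).measurableSet

theorem meas_of_det {α β : Type} [Finite α] [MeasurableSpace α] [MeasurableSingletonClass α]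
    [MeasurableSpace β] {m : ℕ} {F : (ℕ → α) → β}
    (h : ∀ x y, (∀ i < m + 1, x i = y i) → F x = F y) : Measurable F := by
  intro B _
  apply Det.meas (m := m)
  intro x y hxy hx
  simpa [← h x y hxy] using hx

theorem step_meas {α : Type} [Finite α] [MeasurableSpace α] [MeasurableSingletonClass α]
    (step : List α → α → α → ℝ≥0∞) (m : ℕ) (t : α) :
    Measurable (fun x : ℕ → α => step (hst m x) (x m) t) := by
  apply meas_of_det (m := m)
  intro x y h
  rw [hst_congr (fun i hi => h i (by omega)), h m (by omega)]

theorem eval_meas {α : Type} [MeasurableSpace α] [MeasurableSingletonClass α] (m : ℕ) (t : α) :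
    MeasurableSet {x : ℕ → α | x m = t} :=
  measurable_pi_apply (X := fun _ : ℕ => α) m (measurableSet_singleton t)

theorem PM.step_eq {α : Type} [Finite α] [MeasurableSpace α] [MeasurableSingletonClass α]
    {step : List α → α → α → ℝ≥0∞} {s : α}
    {μ : Measure (ℕ → α)} (h : PM step s μ) {m : ℕ} {E : Set (ℕ → α)} (hE : Det m E) (t : α) :
    μ (E ∩ {x | x (m+1) = t}) = ∫⁻ x in E, step (hst m x) (x m) t ∂μ := by
  have := h.1
  have : Nonempty α := ⟨s⟩
  have key : (μ.restrict {x | x (m+1) = t}).map (pre (m+1)) =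
      (μ.withDensity (fun x => step (hst m x) (x m) t)).map (pre (m+1)) := by
    apply Measure.ext_of_singleton
    intro w
    obtain ⟨x, rfl⟩ := pre_surj (m+1) w
    have hm := measurableSet_singleton (pre (m+1) x)
    rw [Measure.map_apply (pre_meas _) hm, Measure.map_apply (pre_meas _) hm,
      Measure.restrict_apply (pre_meas _ hm), withDensity_apply _ (pre_meas _ hm), pre_singleton]
    have h1 : ∫⁻ y in CC m x, step (hst m y) (y m) t ∂μ =
        ∫⁻ y in CC m x, step (hst m x) (x m) t ∂μ := by
      apply setLIntegral_congr_fun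
      · rw [← pre_singleton]; exact pre_meas _ hm
      · intro y hy
        simp only
        rw [hst_congr (fun i hi => hy i (by omega)), hy m (by omega)]
    rw [h1, setLIntegral_const, mul_comm]
    have h2 := h.cc_succ (Function.update x (m+1) t) m
    have e1 : CC (m+1) (Function.update x (m+1) t) = CC m x ∩ {x | x (m+1) = t} := by
      ext y
      simp only [CC, Set.mem_ofPred_eq, Set.mem_inter_iff]
      constructor
      · intro h
        refine ⟨fun i hi => ?_, ?_⟩
        · rw [h i (by omega), Function.update_of_ne (by omega)]
        · rw [h (m+1) (by omega), Function.update_self]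
      · rintro ⟨h, h'⟩ i hi
        by_cases hi' : i = m + 1
        · subst hi'; rw [h', Function.update_self]
        · rw [h i (by omega), Function.update_of_ne hi']
    have e2 : CC m (Function.update x (m+1) t) = CC m x := by
      ext y
      simp only [CC, Set.mem_ofPred_eq]
      refine forall₂_congr fun i hi => ?_
      rw [Function.update_of_ne (by omega)]
    rw [e1, e2, Function.update_self, Function.update_of_ne (by omega),
      hst_congr (y := x) (fun _ _ => Function.update_of_ne (by omega) _ _)] at h2
    exact h2
  have hW : MeasurableSet (pre (m+1) '' E) := (Set.toFinite _).measurableSet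
  have := congrArg (fun ν => ν (pre (m+1) '' E)) key
  rw [Measure.map_apply (pre_meas _) hW, Measure.map_apply (pre_meas _) hW, ← hE.eq,
      Measure.restrict_apply hE.meas, withDensity_apply _ hE.meas] at this
  exact this

theorem PM.ae_step {α : Type} [Finite α] [MeasurableSpace α] [MeasurableSingletonClass α]
    {step : List α → α → α → ℝ≥0∞} {s : α}
    {μ : Measure (ℕ → α)} (h : PM step s μ) :
    ∀ᵐ x ∂μ, ∀ m, step (hst m x) (x m) (x (m+1)) ≠ 0 := by
  rw [ae_all_iff]
  intro m
  have : ∀ᵐ x ∂μ, ∀ t, x (m+1) = t → step (hst m x) (x m) t ≠ 0 := by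
    rw [ae_all_iff]
    intro t
    have hE : Det m {x : ℕ → α | step (hst m x) (x m) t = 0} := by
      intro x y hxy hx
      simp only [Set.mem_ofPred_eq] at *
      rw [← hst_congr (fun i hi => hxy i (by omega)), ← hxy m (by omega), hx]
    have h1 := h.step_eq hE t
    rw [setLIntegral_congr_fun (g := fun _ => 0) hE.meas (fun x hx => hx)] at h1
    simp only [lintegral_zero] at h1
    rw [ae_iff]
    convert h1 using 2
    ext x
    simp only [Set.mem_ofPred_eq, Set.mem_inter_iff]
    tauto
  filter_upwards [this] with x hx
  exact hx _ rfl

theorem measure_ext_cc {α : Type} [Finite α] [Nonempty α] [MeasurableSpace α]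
    [MeasurableSingletonClass α]
    {P Q : Measure (ℕ → α)} [IsProbabilityMeasure P] [IsProbabilityMeasure Q]
    (h : ∀ m x, P (CC m x) = Q (CC m x)) : P = Q := by
  have key : ∀ m, P.map (pre (m+1)) = Q.map (pre (m+1)) := by
    intro m
    apply Measure.ext_of_singleton
    intro w
    obtain ⟨x, rfl⟩ := pre_surj (m+1) w
    have hm := measurableSet_singleton (pre (m+1) x)
    rw [Measure.map_apply (pre_meas _) hm, Measure.map_apply (pre_meas _) hm, pre_singleton, h]
  refine IsProjectiveLimit.unique (P := fun I : Finset ℕ => Q.map I.restrict) ?_ (fun I => rfl)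
  intro I
  let r : (Fin (I.sup id + 1) → α) → (I → α) := fun w i =>
    w ⟨i.1, Nat.lt_succ_of_le (Finset.le_sup (f := id) i.2)⟩
  have hr : Measurable r := measurable_pi_lambda _ fun i => measurable_pi_apply _
  have : (I.restrict : (ℕ → α) → (I → α)) = r ∘ pre (I.sup id + 1) := by
    funext x i; rfl
  change P.map I.restrict = Q.map I.restrict
  rw [this, ← Measure.map_map hr (pre_meas _), ← Measure.map_map hr (pre_meas _), key]

/-! ### Positions -/

/-- Is position `k` of a play of `G` probabilistic? -/
def isP (b : Bool) : ℕ → Bool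
  | 0 => b
  | k+1 => !isP b k

/-- Position in `G'` of the `k`-th state. -/
def pos (b : Bool) : ℕ → ℕ
  | 0 => 0
  | k+1 => pos b k + if isP b k then 2 else 1

/-- Inverse of `pos` with a flag for the inserted positions. -/
def st (b : Bool) : ℕ → ℕ × Bool
  | 0 => (0, false)
  | j+1 => if (st b j).2 then ((st b j).1 + 1, false)
      else if isP b (st b j).1 then ((st b j).1, true) else ((st b j).1 + 1, false)

theorem st_pos (b : Bool) (k : ℕ) : st b (pos b k) = (k, false) := by
  induction k with
  | zero => rfl
  | succ k ih =>
    rw [pos]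
    by_cases h : isP b k <;> simp [h, st, ih]

theorem st_pos_succ (b : Bool) (k : ℕ) (h : isP b k = true) :
    st b (pos b k + 1) = (k, true) := by
  simp [st, st_pos, h]

theorem st_spec (b : Bool) (j : ℕ) :
    j = pos b (st b j).1 + (if (st b j).2 then 1 else 0) ∧
      ((st b j).2 = true → isP b (st b j).1 = true) := by
  induction j with
  | zero => simp [st, pos]
  | succ j ih =>
    rcases h : st b j with ⟨k, c⟩
    rw [h] at ih
    simp only at ih
    cases c
    · by_cases h2 : isP b k
      · simp [st, h, h2] at ih ⊢; omega
      · simp [st, h, h2, pos] at ih ⊢; omega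
    · simp [st, h, pos] at ih ⊢; simp [ih.2]; omega

theorem pos_strictMono (b : Bool) : StrictMono (pos b) := by
  apply strictMono_nat_of_lt_succ
  intro k
  rw [pos]; split <;> omega

theorem st_mono (b : Bool) (k j : ℕ) (h : j < pos b k + 1) : (st b j).1 < k + 1 := by
  by_contra hc
  have h1 := (st_spec b j).1
  have := (pos_strictMono b) (show k < (st b j).1 by omega)
  omega

theorem st_mono' (b : Bool) (k j : ℕ) (h : j < pos b k + 2) (hP : isP b k = true) :
    (st b j).1 < k + 1 := by
  by_contra hc
  have h1 := (st_spec b j).1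
  have h2 := (pos_strictMono b).monotone (show k + 1 ≤ (st b j).1 by omega)
  simp [pos, hP] at h2
  omega

/-- Projection of plays. -/
def DD {S : Type} {n : ℕ} (b : Bool) (x : ℕ → S' S n) : ℕ → S := fun k => unbar (x (pos b k))

/-- Well-shaped plays of `G'`. -/
def Good {S : Type} {n : ℕ} (turn : S → Turn) (b : Bool) (x : ℕ → S' S n) : Prop :=
  ∀ k, ∃ t, x (pos b k) = Sum.inl t ∧ (turn t = Turn.prob ↔ isP b k = true) ∧
    (isP b k = true → ∃ i, x (pos b k + 1) = Sum.inr (t, i))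

theorem Good.inl {S : Type} {n : ℕ} {turn : S → Turn} {b : Bool} {x : ℕ → S' S n}
    (h : Good turn b x) (k : ℕ) : x (pos b k) = Sum.inl (DD b x k) := by
  obtain ⟨t, h1, -⟩ := h k
  simp [DD, h1, unbar]

theorem Good.turn {S : Type} {n : ℕ} {turn : S → Turn} {b : Bool} {x : ℕ → S' S n}
    (h : Good turn b x) (k : ℕ) : turn (DD b x k) = Turn.prob ↔ isP b k = true := by
  obtain ⟨t, h1, h2, -⟩ := h k
  simpa [DD, h1, unbar] using h2

theorem Good.inr {S : Type} {n : ℕ} {turn : S → Turn} {b : Bool} {x : ℕ → S' S n}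
    (h : Good turn b x) (k : ℕ) (hk : isP b k = true) :
    ∃ i, x (pos b k + 1) = Sum.inr (DD b x k, i) := by
  obtain ⟨t, h1, h2, h3⟩ := h k
  simpa [DD, h1, unbar] using h3 hk

theorem Good.unbar_eq {S : Type} {n : ℕ} {turn : S → Turn} {b : Bool} {x : ℕ → S' S n}
    (h : Good turn b x) (j : ℕ) : unbar (x j) = DD b x (st b j).1 := by
  have h1 := st_spec b j
  by_cases hc : (st b j).2
  · simp only [hc, if_true, forall_const] at h1
    obtain ⟨i, hi⟩ := h.inr _ h1.2
    rw [← h1.1] at hi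
    simp [hi, unbar]
  · simp only [hc] at h1
    have := h.inl (st b j).1
    rw [show pos b (st b j).1 = j by have := h1.1; simp at this; omega] at this
    rw [this, unbar]

theorem Good.phi {S : Type} {n : ℕ} {turn : S → Turn} {b : Bool} {x : ℕ → S' S n}
    (h : Good turn b x) (φ : Set (ℕ → S)) : x ∈ phi' φ ↔ DD b x ∈ φ := by
  have hr : Set.range (pos b) = {m | (x m).isLeft = true} := by
    ext j
    constructor
    · rintro ⟨k, rfl⟩
      simp [h.inl]
    · intro hj
      have h1 := st_spec b j
      by_cases hc : (st b j).2
      · simp only [hc, if_true, forall_const] at h1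
        obtain ⟨i, hi⟩ := h.inr _ h1.2
        rw [← h1.1] at hi
        simp [hi] at hj
      · refine ⟨(st b j).1, ?_⟩
        simp [hc] at h1; omega
  have hinf : {m | (x m).isLeft = true}.Infinite := by
    rw [← hr]; exact Set.infinite_range_of_injective (pos_strictMono b).injective
  have hn : Nat.nth (fun m => (x m).isLeft = true) = pos b := by
    apply (StrictMono.range_inj (Nat.nth_strictMono hinf) (pos_strictMono b)).1
    rw [Nat.range_nth_of_infinite hinf, hr]
  simp only [phi', Set.mem_ofPred_eq, hinf, true_and, hn]
  rfl

/-! ### Steps in the derandomized game -/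

instance instMSC {S : Type} [MeasurableSpace S] [DiscreteMeasurableSpace S] {n : ℕ} :
    MeasurableSingletonClass (S' S n) := by
  constructor
  rintro (x | x)
  · rw [← Set.image_singleton]
    exact (measurableSet_singleton x).inl_image
  · rw [← Set.image_singleton]
    exact measurableSet_inr_image.2 (measurableSet_singleton x)

theorem stepG'_p1 [DecidableEq S] [Fintype A₁] [Fintype A₂] {n : ℕ} [NeZero n]
    {turn : S → Turn} {δ₁ : S → A₁ → S} {δ₂ : S → A₂ → S} {succ : S → ZMod n → S}
    {f : A₁ → ZMod n} {g : A₂ → ZMod n}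
    {σ : List (S' S n) → PMF A₁} {π : List (S' S n) → PMF A₂}
    {x : ℕ → S' S n} {j : ℕ} {t : S} (hx : x j = Sum.inl t) (ht : turn t = Turn.p1)
    (y : S' S n) :
    stepG' n turn δ₁ δ₂ succ f g σ π (hst j x) (x j) y =
      ∑ a, σ (hst (j+1) x) a * (if Sum.inl (δ₁ t a) = y then 1 else 0) := by
  rw [hst_succ, hx]
  simp only [stepG', turn', ht, delta₁', tsum_fintype]
  refine Finset.sum_congr rfl fun a _ => ?_
  congr

theorem stepG'_p2 [DecidableEq S] [Fintype A₁] [Fintype A₂] {n : ℕ} [NeZero n]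
    {turn : S → Turn} {δ₁ : S → A₁ → S} {δ₂ : S → A₂ → S} {succ : S → ZMod n → S}
    {f : A₁ → ZMod n} {g : A₂ → ZMod n}
    {σ : List (S' S n) → PMF A₁} {π : List (S' S n) → PMF A₂}
    {x : ℕ → S' S n} {j : ℕ} {t : S} (hx : x j = Sum.inl t) (ht : turn t = Turn.p2)
    (y : S' S n) :
    stepG' n turn δ₁ δ₂ succ f g σ π (hst j x) (x j) y =
      ∑ a, π (hst (j+1) x) a * (if Sum.inl (δ₂ t a) = y then 1 else 0) := by
  rw [hst_succ, hx]
  simp [stepG', turn', ht, delta₂', tsum_fintype]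

theorem stepG'_prob [DecidableEq S] [Fintype A₁] [Fintype A₂] {n : ℕ} [NeZero n]
    {turn : S → Turn} {δ₁ : S → A₁ → S} {δ₂ : S → A₂ → S} {succ : S → ZMod n → S}
    {f : A₁ → ZMod n} {g : A₂ → ZMod n}
    {σ : List (S' S n) → PMF A₁} {π : List (S' S n) → PMF A₂}
    {x : ℕ → S' S n} {j : ℕ} {t : S} (hx : x j = Sum.inl t) (ht : turn t = Turn.prob)
    (y : S' S n) :
    stepG' n turn δ₁ δ₂ succ f g σ π (hst j x) (x j) y =
      ∑ a, π (hst (j+1) x) a * (if Sum.inr (t, g a) = y then 1 else 0) := by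
  rw [hst_succ, hx]
  simp [stepG', turn', ht, delta₂', tsum_fintype]

theorem stepG'_inr [DecidableEq S] [Fintype A₁] [Fintype A₂] {n : ℕ} [NeZero n]
    {turn : S → Turn} {δ₁ : S → A₁ → S} {δ₂ : S → A₂ → S} {succ : S → ZMod n → S}
    {f : A₁ → ZMod n} {g : A₂ → ZMod n}
    {σ : List (S' S n) → PMF A₁} {π : List (S' S n) → PMF A₂}
    {x : ℕ → S' S n} {j : ℕ} {t : S} {i : ZMod n} (hx : x j = Sum.inr (t, i))
    (y : S' S n) :
    stepG' n turn δ₁ δ₂ succ f g σ π (hst j x) (x j) y =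
      ∑ a, σ (hst (j+1) x) a * (if Sum.inl (succ t (i + f a)) = y then 1 else 0) := by
  rw [hst_succ, hx]
  simp only [stepG', turn', delta₁', tsum_fintype]
  refine Finset.sum_congr rfl fun a _ => ?_
  congr

theorem exists_of_sum_ne {A B : Type} [Fintype A] [DecidableEq B] {p : PMF A} {F : A → B} {y : B}
    (h : ∑ a, p a * (if F a = y then 1 else 0) ≠ 0) : ∃ a, F a = y := by
  by_contra hc
  push Not at hc
  exact h (by simp [hc])

theorem good_ae [Finite S] [DecidableEq S] [Fintype A₁] [Fintype A₂] [MeasurableSpace S]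
    [DiscreteMeasurableSpace S] {n : ℕ} [NeZero n]
    {turn : S → Turn} {δ₁ : S → A₁ → S} {δ₂ : S → A₂ → S} {succ : S → ZMod n → S}
    (hδ₁ : ∀ s a, turn s = Turn.p1 → turn (δ₁ s a) = Turn.prob)
    (hδ₂ : ∀ s b, turn s = Turn.p2 → turn (δ₂ s b) = Turn.prob)
    (hsucc : ∀ s k, turn s = Turn.prob → turn (succ s k) ≠ Turn.prob)
    {f : A₁ → ZMod n} {g : A₂ → ZMod n}
    {σ : List (S' S n) → PMF A₁} {π : List (S' S n) → PMF A₂} {s : S}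
    {μ : Measure (ℕ → S' S n)}
    (h : PM (stepG' n turn δ₁ δ₂ succ f g σ π) (Sum.inl s) μ) :
    ∀ᵐ x ∂μ, Good turn (decide (turn s = Turn.prob)) x := by
  filter_upwards [h.zero, h.ae_step] with x h0 hs
  set b := decide (turn s = Turn.prob) with hb
  have hX : ∀ k t, x (pos b k) = Sum.inl t → turn t = Turn.prob →
      ∃ i, x (pos b k + 1) = Sum.inr (t, i) := by
    intro k t h1 h2
    have := hs (pos b k)
    rw [stepG'_prob h1 h2] at this
    obtain ⟨a, ha⟩ := exists_of_sum_ne this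
    exact ⟨_, ha.symm⟩
  have key : ∀ k, ∃ t, x (pos b k) = Sum.inl t ∧ (turn t = Turn.prob ↔ isP b k = true) := by
    intro k
    induction k with
    | zero => exact ⟨s, h0, by simp [isP, hb]⟩
    | succ k ih =>
      obtain ⟨t, h1, h2⟩ := ih
      have hk := hs (pos b k)
      cases ht : turn t with
      | p1 =>
        have hp : isP b k = false := by simpa [ht] using h2
        rw [stepG'_p1 h1 ht] at hk
        obtain ⟨a, ha⟩ := exists_of_sum_ne hk
        exact ⟨δ₁ t a, by simp [pos, hp, ha], by simp [isP, hp, hδ₁ t a ht]⟩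
      | p2 =>
        have hp : isP b k = false := by simpa [ht] using h2
        rw [stepG'_p2 h1 ht] at hk
        obtain ⟨a, ha⟩ := exists_of_sum_ne hk
        exact ⟨δ₂ t a, by simp [pos, hp, ha], by simp [isP, hp, hδ₂ t a ht]⟩
      | prob =>
        have hp : isP b k = true := by simpa [ht] using h2
        obtain ⟨i, hi⟩ := hX k t h1 ht
        have hk := hs (pos b k + 1)
        rw [stepG'_inr hi] at hk
        obtain ⟨a, ha⟩ := exists_of_sum_ne hk
        exact ⟨succ t (i + f a), by simp [pos, hp, ha], by simp [isP, hp, hsucc t _ ht]⟩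
  intro k
  obtain ⟨t, h1, h2⟩ := key k
  exact ⟨t, h1, h2, fun h3 => hX k t h1 (h2.2 h3)⟩

/-- Plays of `G'` projecting to plays agreeing with `ρ` up to `m`. -/
def EE {S : Type} {n : ℕ} (b : Bool) (m : ℕ) (ρ : ℕ → S) : Set (ℕ → S' S n) := DD b ⁻¹' CC m ρ

theorem EE_det {S : Type} {n : ℕ} (b : Bool) (m : ℕ) (ρ : ℕ → S) :
    Det (pos b m) (EE (n := n) b m ρ) := by
  intro x y hxy hx i hi
  rw [← hx i hi]
  have := (pos_strictMono b).monotone (Nat.le_of_lt_succ hi)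
  simp only [DD]
  rw [hxy _ (by omega)]

theorem Det.succ {α : Type} {m : ℕ} {E : Set (ℕ → α)} (h : Det m E) : Det (m+1) E :=
  fun x y hxy hx => h x y (fun i hi => hxy i (by omega)) hx

theorem DD_meas {S : Type} [MeasurableSpace S] [DiscreteMeasurableSpace S] {n : ℕ} (b : Bool) :
    Measurable (DD (S := S) (n := n) b) := by
  apply measurable_pi_lambda
  intro k
  have hu : Measurable (unbar : S' S n → S) := by
    rw [show (unbar : S' S n → S) = Sum.elim id Prod.fst by
      funext x; rcases x with x | ⟨x, i⟩ <;> rfl]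
    exact measurable_id.sumElim measurable_fst
  exact hu.comp (measurable_pi_apply (X := fun _ : ℕ => S' S n) _)

theorem strat_meas {S A : Type} [Finite S] [MeasurableSpace S] [DiscreteMeasurableSpace S]
    {n : ℕ} [NeZero n] (σ : List (S' S n) → PMF A) (m : ℕ) (a : A) :
    Measurable (fun x : ℕ → S' S n => σ (hst (m+1) x) a) := by
  apply meas_of_det (m := m)
  intro x y h
  rw [hst_congr h]

theorem transfer [Finite S] [Nonempty S] [DecidableEq S] [Fintype A₁] [Fintype A₂]
    [MeasurableSpace S]
    [DiscreteMeasurableSpace S] {n : ℕ} [NeZero n]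
    {turn : S → Turn} {δ₁ : S → A₁ → S} {δ₂ : S → A₂ → S} {succ : S → ZMod n → S}
    (hδ₁ : ∀ s a, turn s = Turn.p1 → turn (δ₁ s a) = Turn.prob)
    (hδ₂ : ∀ s b, turn s = Turn.p2 → turn (δ₂ s b) = Turn.prob)
    (hsucc : ∀ s k, turn s = Turn.prob → turn (succ s k) ≠ Turn.prob)
    {f : A₁ → ZMod n} {g : A₂ → ZMod n}
    {σ : List S → PMF A₁} {π : List S → PMF A₂}
    {σ' : List (S' S n) → PMF A₁} {π' : List (S' S n) → PMF A₂} {s : S}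
    {μ : Measure (ℕ → S)} {μ' : Measure (ℕ → S' S n)}
    (h : PM (stepG n turn δ₁ δ₂ succ σ π) s μ)
    (h' : PM (stepG' n turn δ₁ δ₂ succ f g σ' π') (Sum.inl s) μ')
    {b : Bool} (hb : b = decide (turn s = Turn.prob))
    (H1 : ∀ m ρ, turn (ρ m) = Turn.p1 → ∀ a,
      ∫⁻ x in EE b m ρ, σ' (hst (pos b m + 1) x) a ∂μ' = μ' (EE b m ρ) * σ (hst (m+1) ρ) a)
    (H2 : ∀ m ρ, turn (ρ m) = Turn.p2 → isP b m = false → ∀ a,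
      ∫⁻ x in EE b m ρ, π' (hst (pos b m + 1) x) a ∂μ' = μ' (EE b m ρ) * π (hst (m+1) ρ) a)
    (H3 : ∀ m ρ, turn (ρ m) = Turn.prob → isP b m = true → ∀ u,
      ∫⁻ x in EE b m ρ, stepG' n turn δ₁ δ₂ succ f g σ' π' (hst (pos b m + 1) x)
        (x (pos b m + 1)) (Sum.inl u) ∂μ' = μ' (EE b m ρ) *
      (((Finset.univ.filter fun k : ZMod n => succ (ρ m) k = u).card : ℝ≥0∞) / (n : ℝ≥0∞)))
    (φ : Set (ℕ → S)) (hφ : MeasurableSet φ) : μ' (phi' φ) = μ φ := by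
  have hg : ∀ᵐ x ∂μ', Good turn b x := by rw [hb]; exact good_ae hδ₁ hδ₂ hsucc h'
  have := h.1
  have := h'.1
  have key : ∀ m ρ, μ' (EE b m ρ) = μ (CC m ρ) := by
    intro m ρ
    induction m with
    | zero =>
      by_cases hs : ρ 0 = s
      · rw [h.cc ρ hs, Finset.prod_range_zero]
        rw [← measure_univ (μ := μ')]
        apply measure_congr
        filter_upwards [h'.zero] with x hx
        apply propext
        refine ⟨fun _ => trivial, fun _ => ?_⟩
        intro i hi
        obtain rfl : i = 0 := by omega
        simp [DD, pos, hx, unbar, hs]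
      · rw [h.cc_ne ρ hs]
        refine measure_mono_null ?_ (ae_iff.1 h'.zero)
        intro x hx hx'
        have := hx 0 (by omega)
        simp [DD, pos, hx', unbar] at this
        exact hs this.symm
    | succ m ih =>
      have e1 : μ' (EE b (m+1) ρ) =
          μ' (EE b m ρ ∩ {x | x (pos b (m+1)) = Sum.inl (ρ (m+1))}) := by
        apply measure_congr
        filter_upwards [hg] with x hx
        apply propext
        constructor
        · intro hE
          exact ⟨fun i hi => hE i (by omega), by
            change x _ = _
            rw [hx.inl, hE (m+1) (by omega)]⟩
        · rintro ⟨hE, hE'⟩ i hi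
          by_cases hi' : i = m + 1
          · subst hi'
            change x _ = _ at hE'
            simp [DD, hE', unbar]
          · exact hE i (by omega)
      rw [e1, h.cc_succ, ← ih]
      by_cases hz : μ' (EE b m ρ) = 0
      · rw [hz, zero_mul]
        exact measure_mono_null Set.inter_subset_left hz
      obtain ⟨x₀, hx₀, hx₀g⟩ : ∃ x, x ∈ EE b m ρ ∧ Good turn b x := by
        by_contra hc
        push Not at hc
        exact hz (measure_mono_null hc (ae_iff.1 hg))
      have hPm : turn (ρ m) = Turn.prob ↔ isP b m = true := by
        rw [← hx₀g.turn, hx₀ m (by omega)]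
      have hin : ∀ x : ℕ → S' S n, Good turn b x → x ∈ EE b m ρ → x (pos b m) = Sum.inl (ρ m) := by
        intro x hx hE
        rw [hx.inl, hE m (by omega)]
      have hEm := (EE_det (n := n) b m ρ).meas
      cases ht : turn (ρ m) with
      | p1 =>
        have hp : isP b m = false := by simpa [ht] using hPm
        simp only [pos, hp]
        rw [show pos b m + (if false = true then 2 else 1) = pos b m + 1 by simp]
        rw [h'.step_eq (EE_det b m ρ)]
        rw [setLIntegral_congr_fun_ae (g := fun x => ∑ a, σ' (hst (pos b m+1) x) a *
          (if δ₁ (ρ m) a = ρ (m+1) then 1 else 0)) hEm (by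
            filter_upwards [hg] with x hx hE
            rw [stepG'_p1 (hin x hx hE) ht]
            simp)]
        rw [lintegral_finsetSum _ (fun a _ => (strat_meas σ' _ a).mul_const _)]
        simp only [stepG, ht, tsum_fintype, Finset.mul_sum]
        refine Finset.sum_congr rfl fun a _ => ?_
        rw [lintegral_mul_const _ (strat_meas σ' _ a), H1 m ρ ht, ← hst_succ, mul_assoc]
      | p2 =>
        have hp : isP b m = false := by simpa [ht] using hPm
        simp only [pos, hp]
        rw [show pos b m + (if false = true then 2 else 1) = pos b m + 1 by simp]
        rw [h'.step_eq (EE_det b m ρ)]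
        rw [setLIntegral_congr_fun_ae (g := fun x => ∑ a, π' (hst (pos b m+1) x) a *
          (if δ₂ (ρ m) a = ρ (m+1) then 1 else 0)) hEm (by
            filter_upwards [hg] with x hx hE
            rw [stepG'_p2 (hin x hx hE) ht]
            simp)]
        rw [lintegral_finsetSum _ (fun a _ => (strat_meas π' _ a).mul_const _)]
        simp only [stepG, ht, tsum_fintype, Finset.mul_sum]
        refine Finset.sum_congr rfl fun a _ => ?_
        rw [lintegral_mul_const _ (strat_meas π' _ a), H2 m ρ ht hp, ← hst_succ, mul_assoc]
      | prob =>
        have hp : isP b m = true := by simpa [ht] using hPm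
        simp only [pos, hp]
        rw [show pos b m + (if True then 2 else 1) = pos b m + 1 + 1 by simp]
        rw [h'.step_eq (EE_det b m ρ).succ, H3 m ρ ht hp]
        simp only [stepG, ht]
  have hm : μ = μ'.map (DD b) := by
    have : IsProbabilityMeasure (μ'.map (DD b)) :=
      Measure.isProbabilityMeasure_map (DD_meas b).aemeasurable
    apply measure_ext_cc
    intro m ρ
    rw [Measure.map_apply (DD_meas b), ← key m ρ]
    · rfl
    · rw [← pre_singleton]
      exact pre_meas _ (measurableSet_singleton _)
  rw [hm, Measure.map_apply (DD_meas b) hφ]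
  apply measure_congr
  filter_upwards [hg] with x hx
  exact propext (hx.phi φ)

/-! ### Strategy translations -/

/-- A distribution on actions whose image under `f` is uniform. -/
noncomputable def unifOf {A : Type} {n : ℕ} [NeZero n] (f : A → ZMod n)
    (hf : Function.Surjective f) : PMF A :=
  (PMF.uniformOfFintype (ZMod n)).map (Function.surjInv hf)

theorem unifOf_sum {A : Type} [Fintype A] {n : ℕ} [NeZero n] (f : A → ZMod n)
    (hf : Function.Surjective f) (F : ZMod n → ℝ≥0∞) :
    ∑ a, unifOf f hf a * F (f a) = ∑ k, (n : ℝ≥0∞)⁻¹ * F k := by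
  classical
  simp only [unifOf, PMF.map_apply, tsum_fintype, PMF.uniformOfFintype_apply, ZMod.card,
    Finset.sum_mul]
  rw [Finset.sum_comm]
  refine Finset.sum_congr rfl fun k _ => ?_
  rw [Finset.sum_eq_single (Function.surjInv hf k)]
  · simp [Function.surjInv_eq hf]
  · intro a _ ha
    simp [ha]
  · simp

theorem unif_count {S : Type} [DecidableEq S] {n : ℕ} [NeZero n] (w : ZMod n → S) (i : ZMod n)
    (u : S) :
    ∑ k, (n : ℝ≥0∞)⁻¹ * (if w (i + k) = u then 1 else 0) =
      ((Finset.univ.filter fun k : ZMod n => w k = u).card : ℝ≥0∞) / (n : ℝ≥0∞) := by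
  have : ∑ k, (if w (i + k) = u then (1 : ℝ≥0∞) else 0) =
      ∑ k, (if w k = u then (1 : ℝ≥0∞) else 0) :=
    Equiv.sum_comp (Equiv.addLeft i) (fun k => if w k = u then (1 : ℝ≥0∞) else 0)
  rw [← Finset.mul_sum, this, Finset.sum_boole, div_eq_mul_inv, mul_comm]

theorem hst_length {α : Type} (m : ℕ) (x : ℕ → α) : (hst m x).length = m := by simp [hst]

theorem hst_getD {α : Type} {m i : ℕ} (x : ℕ → α) (d : α) (h : i < m) :
    (hst m x).getD i d = x i := by
  simp [hst, List.getD_eq_getElem?_getD, h]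

theorem hst_map {α β : Type} (m : ℕ) (x : ℕ → α) (F : α → β) :
    (hst m x).map F = hst m (fun i => F (x i)) := by
  simp [hst]

theorem getD_map_eq {α β : Type} {F : α → β} {l l' : List α} (h : l.map F = l'.map F) (j : ℕ)
    (d : α) : F (l.getD j d) = F (l'.getD j d) := by
  rw [← List.getD_map (f := F), ← List.getD_map (f := F), h]

/-- Deletion of the inserted positions of a history. -/
def del {S : Type} {n : ℕ} (b : Bool) (s : S) (h : List (S' S n)) : List S :=
  hst ((st b (h.length - 1)).1 + 1) (fun i => unbar (h.getD (pos b i) (Sum.inl s)))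

theorem del_hst {S : Type} {n : ℕ} (b : Bool) (s : S) (m : ℕ) (x : ℕ → S' S n) :
    del b s (hst (pos b m + 1) x) = hst (m+1) (DD b x) := by
  unfold del
  rw [hst_length, Nat.add_sub_cancel, st_pos]
  apply hst_congr
  intro i hi
  have : pos b i ≤ pos b m := (pos_strictMono b).monotone (Nat.le_of_lt_succ hi)
  rw [hst_getD _ _ (by omega), DD]

theorem del_obs {S O : Type} {n : ℕ} (b : Bool) (s : S) (obs : S → O) {h h' : List (S' S n)}
    (hh : h.map (obs' obs) = h'.map (obs' obs)) :
    (del b s h).map obs = (del b s h').map obs := by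
  have hl : h.length = h'.length := by simpa using congrArg List.length hh
  unfold del
  rw [hst_map, hst_map, hl]
  apply hst_congr
  intro i _
  exact getD_map_eq hh _ _

/-- Insertion of dummy positions in a history. -/
def dup {S : Type} (n : ℕ) (b : Bool) (s : S) (h : List S) : List (S' S n) :=
  hst (pos b (h.length - 1) + 1) (fun j => Sum.inl (h.getD (st b j).1 s))

theorem dup_hst {S : Type} (n : ℕ) (b : Bool) (s : S) (m : ℕ) (ρ : ℕ → S) :
    dup n b s (hst (m+1) ρ) = hst (pos b m + 1) (fun j => Sum.inl (ρ (st b j).1)) := by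
  unfold dup
  rw [hst_length, Nat.add_sub_cancel]
  apply hst_congr
  intro i hi
  rw [hst_getD _ _ (st_mono b m i hi)]

theorem dup_obs {S O : Type} (n : ℕ) (b : Bool) (s : S) (obs : S → O) {h h' : List S}
    (hh : h.map obs = h'.map obs) :
    (dup n b s h).map (obs' obs) = (dup n b s h').map (obs' obs) := by
  have hl : h.length = h'.length := by simpa using congrArg List.length hh
  unfold dup
  rw [hst_map, hst_map, hl]
  apply hst_congr
  intro i _
  exact getD_map_eq hh _ _

theorem EE_congr {S : Type} {n : ℕ} (b : Bool) (m : ℕ) {ρ ρ' : ℕ → S}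
    (h : ∀ i < m + 1, ρ i = ρ' i) : EE (n := n) b m ρ = EE b m ρ' := by
  ext x
  refine forall₂_congr fun i hi => ?_
  rw [h i hi]

/-- Translation of player-1 strategies from `G` to `G'`. -/
noncomputable def toG' {S A : Type} {n : ℕ} [NeZero n] (b : Bool) (s : S) (f : A → ZMod n)
    (hf : Function.Surjective f) (σ : List S → PMF A) (h : List (S' S n)) : PMF A :=
  if (st b (h.length - 1)).2 then unifOf f hf else σ (del b s h)

/-- Translation of player-2 strategies from `G` to `G'`. -/
noncomputable def toG2' {S A : Type} {n : ℕ} [NeZero n] (b : Bool) (s : S) (g : A → ZMod n)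
    (hg : Function.Surjective g) (π : List S → PMF A) (h : List (S' S n)) : PMF A :=
  if isP b (st b (h.length - 1)).1 then unifOf g hg else π (del b s h)

theorem toG'_obs {S A O : Type} {n : ℕ} [NeZero n] (b : Bool) (s : S) (f : A → ZMod n)
    (hf : Function.Surjective f) (σ : List S → PMF A) (obs : S → O) (hσ : ObsBased obs σ) :
    ObsBased (obs' (n := n) obs) (toG' b s f hf σ) := by
  intro h h' hh
  have hl : h.length = h'.length := by simpa using congrArg List.length hh
  simp only [toG', hl, hσ _ _ (del_obs b s obs hh)]

theorem exists_bayes {S A : Type} [Finite S] [Fintype A] [Nonempty A] [MeasurableSpace S]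
    [DiscreteMeasurableSpace S] {n : ℕ} [NeZero n] (μ : Measure (ℕ → S' S n))
    [IsProbabilityMeasure μ] (π : List (S' S n) → PMF A) (E : Set (ℕ → S' S n)) (m : ℕ) :
    ∃ q : PMF A, ∀ a, ∫⁻ x in E, π (hst (m+1) x) a ∂μ = μ E * q a := by
  by_cases hE : μ E = 0
  · refine ⟨PMF.pure (Classical.arbitrary A), fun a => ?_⟩
    rw [hE, zero_mul, setLIntegral_measure_zero _ _ hE]
  · refine ⟨PMF.ofFintype (fun a => (μ E)⁻¹ * ∫⁻ x in E, π (hst (m+1) x) a ∂μ) ?_, fun a => ?_⟩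
    · rw [← Finset.mul_sum, ← lintegral_finsetSum _ (fun a _ => strat_meas π m a)]
      have : ∀ x, ∑ a, π (hst (m+1) x) a = 1 := by
        intro x
        rw [← tsum_fintype (L := .unconditional A), PMF.tsum_coe]
      simp only [this, setLIntegral_one]
      exact ENNReal.inv_mul_cancel hE (measure_ne_top _ _)
    · rw [PMF.ofFintype_apply, ← mul_assoc, ENNReal.mul_inv_cancel hE (measure_ne_top _ _), one_mul]

theorem dir1 [Finite S] [Nonempty S] [DecidableEq S] [Fintype A₁] [Fintype A₂] [Nonempty A₂]
    [MeasurableSpace S]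
    [DiscreteMeasurableSpace S] {n : ℕ} [NeZero n]
    {turn : S → Turn} {δ₁ : S → A₁ → S} {δ₂ : S → A₂ → S} {succ : S → ZMod n → S}
    (hδ₁ : ∀ s a, turn s = Turn.p1 → turn (δ₁ s a) = Turn.prob)
    (hδ₂ : ∀ s b, turn s = Turn.p2 → turn (δ₂ s b) = Turn.prob)
    (hsucc : ∀ s k, turn s = Turn.prob → turn (succ s k) ≠ Turn.prob)
    {f : A₁ → ZMod n} {g : A₂ → ZMod n} (hf : Function.Surjective f)
    {Pr : S → (List S → PMF A₁) → (List S → PMF A₂) → Measure (ℕ → S)}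
    (hPr : IsPlayMeasure (stepG n turn δ₁ δ₂ succ) Pr)
    {Pr' : S' S n → (List (S' S n) → PMF A₁) → (List (S' S n) → PMF A₂) →
      Measure (ℕ → S' S n)}
    (hPr' : IsPlayMeasure (stepG' n turn δ₁ δ₂ succ f g) Pr')
    (s : S) {b : Bool} (hb : b = decide (turn s = Turn.prob))
    (σ : List S → PMF A₁) (π' : List (S' S n) → PMF A₂)
    (φ : Set (ℕ → S)) (hφ : MeasurableSet φ) :
    ∃ π, Pr' (Sum.inl s) (toG' b s f hf σ) π' (phi' φ) = Pr s σ π φ := by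
  set σ' := toG' b s f hf σ with hσ'
  set μ' := Pr' (Sum.inl s) σ' π' with hμ'
  have hPM' : PM (stepG' n turn δ₁ δ₂ succ f g σ' π') (Sum.inl s) μ' :=
    ⟨hPr'.1 _ _ _, hPr'.2 _ _ _⟩
  have hg : ∀ᵐ x ∂μ', Good turn b x := by rw [hb]; exact good_ae hδ₁ hδ₂ hsucc hPM'
  have := hPM'.1
  let π : List S → PMF A₂ := fun h => Classical.choose
    (exists_bayes μ' π' (EE b (h.length - 1) (fun i => h.getD i s)) (pos b (h.length - 1)))
  refine ⟨π, transfer hδ₁ hδ₂ hsucc ⟨hPr.1 s σ π, hPr.2 s σ π⟩ hPM' hb ?_ ?_ ?_ φ hφ⟩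
  · intro m ρ _ a
    rw [setLIntegral_congr_fun (g := fun _ => σ (hst (m+1) ρ) a) (EE_det b m ρ).meas,
      setLIntegral_const, mul_comm]
    intro x hx
    simp only [hσ', toG', del_hst]
    rw [hst_length, Nat.add_sub_cancel, st_pos]
    simp only [Bool.false_eq_true, if_false]
    rw [hst_congr hx]
  · intro m ρ _ _ a
    have := Classical.choose_spec (exists_bayes μ' π'
      (EE b ((hst (m+1) ρ).length - 1) (fun i => (hst (m+1) ρ).getD i s))
      (pos b ((hst (m+1) ρ).length - 1))) a
    change _ = _ * π (hst (m+1) ρ) a at this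
    simp only [hst_length, Nat.add_sub_cancel] at this
    rw [EE_congr (ρ' := ρ) b m (fun i hi => hst_getD ρ s hi)] at this
    exact this
  · intro m ρ ht hp u
    rw [setLIntegral_congr_fun_ae (g := fun _ =>
      (((Finset.univ.filter fun k : ZMod n => succ (ρ m) k = u).card : ℝ≥0∞) / (n : ℝ≥0∞)))
      (EE_det b m ρ).meas, setLIntegral_const, mul_comm]
    filter_upwards [hg] with x hx hE
    obtain ⟨i, hi⟩ := hx.inr m hp
    rw [hE m (by omega)] at hi
    rw [stepG'_inr hi]
    simp only [hσ', toG']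
    rw [hst_length, Nat.add_sub_cancel, st_pos_succ b m hp]
    simp only [if_true, Sum.inl.injEq]
    rw [unifOf_sum f hf (fun k => if succ (ρ m) (i + k) = u then 1 else 0), unif_count]

theorem dir2 [Finite S] [Nonempty S] [DecidableEq S] [Fintype A₁] [Fintype A₂]
    [MeasurableSpace S]
    [DiscreteMeasurableSpace S] {n : ℕ} [NeZero n]
    {turn : S → Turn} {δ₁ : S → A₁ → S} {δ₂ : S → A₂ → S} {succ : S → ZMod n → S}
    (obs₁ : S → O)
    (hδ₁ : ∀ s a, turn s = Turn.p1 → turn (δ₁ s a) = Turn.prob)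
    (hδ₂ : ∀ s b, turn s = Turn.p2 → turn (δ₂ s b) = Turn.prob)
    (hsucc : ∀ s k, turn s = Turn.prob → turn (succ s k) ≠ Turn.prob)
    {f : A₁ → ZMod n} {g : A₂ → ZMod n} (hg : Function.Surjective g)
    {Pr : S → (List S → PMF A₁) → (List S → PMF A₂) → Measure (ℕ → S)}
    (hPr : IsPlayMeasure (stepG n turn δ₁ δ₂ succ) Pr)
    {Pr' : S' S n → (List (S' S n) → PMF A₁) → (List (S' S n) → PMF A₂) →
      Measure (ℕ → S' S n)}
    (hPr' : IsPlayMeasure (stepG' n turn δ₁ δ₂ succ f g) Pr')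
    (s : S) {b : Bool} (hb : b = decide (turn s = Turn.prob))
    (σ' : List (S' S n) → PMF A₁) (hσ' : ObsBased (obs' obs₁) σ') (π : List S → PMF A₂)
    (φ : Set (ℕ → S)) (hφ : MeasurableSet φ) :
    ∃ π', Pr' (Sum.inl s) σ' π' (phi' φ) = Pr s (fun h => σ' (dup n b s h)) π φ := by
  refine ⟨toG2' b s g hg π, ?_⟩
  set π' : List (S' S n) → PMF A₂ := toG2' b s g hg π with hπ'
  set μ' := Pr' (Sum.inl s) σ' π' with hμ'
  have hPM' : PM (stepG' n turn δ₁ δ₂ succ f g σ' π') (Sum.inl s) μ' :=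
    ⟨hPr'.1 _ _ _, hPr'.2 _ _ _⟩
  have hgood : ∀ᵐ x ∂μ', Good turn b x := by rw [hb]; exact good_ae hδ₁ hδ₂ hsucc hPM'
  have := hPM'.1
  refine transfer hδ₁ hδ₂ hsucc ⟨hPr.1 s _ π, hPr.2 s _ π⟩ hPM' hb ?_ ?_ ?_ φ hφ
  · intro m ρ _ a
    rw [setLIntegral_congr_fun_ae (g := fun _ => σ' (dup n b s (hst (m+1) ρ)) a)
      (EE_det b m ρ).meas, setLIntegral_const, mul_comm]
    filter_upwards [hgood] with x hx hE
    rw [dup_hst]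
    congr 1
    apply hσ'
    rw [hst_map, hst_map]
    apply hst_congr
    intro j hj
    simp only [obs', hx.unbar_eq j, hE _ (st_mono b m j hj)]
    rfl
  · intro m ρ _ hp a
    rw [setLIntegral_congr_fun (g := fun _ => π (hst (m+1) ρ) a) (EE_det b m ρ).meas,
      setLIntegral_const, mul_comm]
    intro x hx
    simp only [hπ', toG2', del_hst]
    rw [hst_length, Nat.add_sub_cancel, st_pos]
    simp only [hp, Bool.false_eq_true, if_false]
    rw [hst_congr hx]
  · intro m ρ ht hp u
    set K : ℝ≥0∞ :=
      (((Finset.univ.filter fun k : ZMod n => succ (ρ m) k = u).card : ℝ≥0∞) / (n : ℝ≥0∞)) with hK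
    set q : PMF A₁ := σ' (hst (pos b m + 1 + 1) (fun j => Sum.inl (ρ (st b j).1))) with hq
    have hEm := (EE_det (n := n) b m ρ).meas
    have hev : ∀ i : ZMod n, MeasurableSet
        {x : ℕ → S' S n | x (pos b m + 1) = Sum.inr (ρ m, i)} := fun i => eval_meas _ _
    rw [setLIntegral_congr_fun_ae (g := fun x => ∑ i : ZMod n,
      Set.indicator {x : ℕ → S' S n | x (pos b m + 1) = Sum.inr (ρ m, i)}
        (fun _ => ∑ a, q a * (if succ (ρ m) (i + f a) = u then 1 else 0)) x) hEm]
    · rw [lintegral_finsetSum _ (fun i _ => measurable_const.indicator (hev i))]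
      have e1 : ∀ i : ZMod n, μ' (EE b m ρ ∩ {x | x (pos b m + 1) = Sum.inr (ρ m, i)}) =
          μ' (EE b m ρ) * (n : ℝ≥0∞)⁻¹ := by
        intro i
        rw [hPM'.step_eq (EE_det b m ρ), setLIntegral_congr_fun_ae (g := fun _ => (n : ℝ≥0∞)⁻¹)
          hEm, setLIntegral_const, mul_comm]
        filter_upwards [hgood] with x hx hE
        have hi := hx.inl m
        rw [hE m (by omega)] at hi
        rw [stepG'_prob hi ht]
        simp only [hπ', toG2']
        rw [hst_length, Nat.add_sub_cancel, st_pos]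
        simp only [hp, if_true, Sum.inr.injEq, Prod.mk.injEq, true_and]
        rw [unifOf_sum g hg (fun k => if k = i then 1 else 0)]
        simp
      simp only [lintegral_indicator_const (hev _), Measure.restrict_apply (hev _)]
      have e2 : ∀ i : ZMod n, μ' ({x | x (pos b m + 1) = Sum.inr (ρ m, i)} ∩ EE b m ρ) =
          μ' (EE b m ρ) * (n : ℝ≥0∞)⁻¹ := fun i => by rw [Set.inter_comm, e1]
      simp only [e2, Finset.sum_mul]
      rw [Finset.sum_comm]
      have e3 : ∀ a, ∑ i : ZMod n, q a * (if succ (ρ m) (i + f a) = u then 1 else 0) *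
          (μ' (EE b m ρ) * (n : ℝ≥0∞)⁻¹) = q a * (μ' (EE b m ρ) * K) := by
        intro a
        rw [hK, ← unif_count (succ (ρ m)) (f a) u, Finset.mul_sum, Finset.mul_sum]
        refine Finset.sum_congr rfl fun i _ => ?_
        rw [add_comm i]
        ring
      simp only [e3]
      rw [← Finset.sum_mul, ← tsum_fintype (L := .unconditional A₁), PMF.tsum_coe, one_mul]
    · filter_upwards [hgood] with x hx hE
      obtain ⟨i, hi⟩ := hx.inr m hp
      rw [hE m (by omega)] at hi
      rw [stepG'_inr hi, Finset.sum_eq_single i]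
      · rw [Set.indicator_of_mem (by exact hi)]
        simp only [Sum.inl.injEq]
        have : σ' (hst (pos b m + 1 + 1) x) = q := by
          apply hσ'
          rw [hst_map, hst_map]
          apply hst_congr
          intro j hj
          simp only [obs', hx.unbar_eq j, hE _ (st_mono' b m j hj hp)]
          rfl
        rw [this]
      · intro j _ hj
        apply Set.indicator_of_notMem
        intro hc
        change x _ = _ at hc
        rw [hi] at hc
        simp at hc
        exact hj hc.symm
      · simp

theorem sup_opt {X Y : Type} {p : X → Prop} {q : Y → Prop} {F : X → ℝ≥0∞} {H : Y → ℝ≥0∞}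
    (h1 : ∀ x, p x → ∃ y, q y ∧ F x ≤ H y) (h2 : ∀ y, q y → ∃ x, p x ∧ H y ≤ F x) :
    (⨆ x : {x // p x}, F x.1) = (⨆ y : {y // q y}, H y.1) ∧
    ((∃ x, p x ∧ F x = ⨆ x : {x // p x}, F x.1) ↔
      (∃ y, q y ∧ H y = ⨆ y : {y // q y}, H y.1)) := by
  have e : (⨆ x : {x // p x}, F x.1) = (⨆ y : {y // q y}, H y.1) := by
    apply le_antisymm
    · refine iSup_le fun x => ?_
      obtain ⟨y, hy, hle⟩ := h1 x.1 x.2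
      exact hle.trans (le_iSup (fun y : {y // q y} => H y.1) ⟨y, hy⟩)
    · refine iSup_le fun y => ?_
      obtain ⟨x, hx, hle⟩ := h2 y.1 y.2
      exact hle.trans (le_iSup (fun x : {x // p x} => F x.1) ⟨x, hx⟩)
  refine ⟨e, ?_, ?_⟩
  · rintro ⟨x, hx, he⟩
    obtain ⟨y, hy, hle⟩ := h1 x hx
    refine ⟨y, hy, le_antisymm (le_iSup (fun y : {y // q y} => H y.1) ⟨y, hy⟩) ?_⟩
    rw [← e, ← he]; exact hle
  · rintro ⟨y, hy, he⟩
    obtain ⟨x, hx, hle⟩ := h2 y hy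
    refine ⟨x, hx, le_antisymm (le_iSup (fun x : {x // p x} => F x.1) ⟨x, hx⟩) ?_⟩
    rw [e, ← he]; exact hle

theorem stmt_5 {S A₁ A₂ O : Type} [Fintype S] [Nonempty S] [DecidableEq S]
    [Fintype A₁] [Nonempty A₁] [Fintype A₂] [Nonempty A₂] [Fintype O]
    [MeasurableSpace S] [DiscreteMeasurableSpace S]
    (n : ℕ) [NeZero n]
    (turn : S → Turn) (δ₁ : S → A₁ → S) (δ₂ : S → A₂ → S) (succ : S → ZMod n → S)
    (obs₁ : S → O)
    -- interaction separation: deterministic moves lead to probabilistic states and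
    -- probabilistic states lead to player states
    (hδ₁ : ∀ s a, turn s = Turn.p1 → turn (δ₁ s a) = Turn.prob)
    (hδ₂ : ∀ s b, turn s = Turn.p2 → turn (δ₂ s b) = Turn.prob)
    (hsucc : ∀ s k, turn s = Turn.prob → turn (succ s k) ≠ Turn.prob)
    (f : A₁ → ZMod n) (g : A₂ → ZMod n)
    (hf : Function.Surjective f) (hg : Function.Surjective g)
    (φ : Set (ℕ → S)) (hφ : MeasurableSet φ)
    (Pr : S → (List S → PMF A₁) → (List S → PMF A₂) → Measure (ℕ → S))
    (hPr : IsPlayMeasure (stepG n turn δ₁ δ₂ succ) Pr)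
    (Pr' : S' S n → (List (S' S n) → PMF A₁) → (List (S' S n) → PMF A₂) →
      Measure (ℕ → S' S n))
    (hPr' : IsPlayMeasure (stepG' n turn δ₁ δ₂ succ f g) Pr')
    (s : S) :
    (⨆ σ : {σ : List S → PMF A₁ // ObsBased obs₁ σ},
        ⨅ π : List S → PMF A₂, Pr s σ.1 π φ) =
      (⨆ σ : {σ : List (S' S n) → PMF A₁ // ObsBased (obs' obs₁) σ},
        ⨅ π : List (S' S n) → PMF A₂, Pr' (Sum.inl s) σ.1 π (phi' φ)) ∧
    ((∃ σ : List S → PMF A₁, ObsBased obs₁ σ ∧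
        (⨅ π : List S → PMF A₂, Pr s σ π φ) =
          ⨆ σ' : {σ' : List S → PMF A₁ // ObsBased obs₁ σ'},
            ⨅ π : List S → PMF A₂, Pr s σ'.1 π φ) ↔
      (∃ σ : List (S' S n) → PMF A₁, ObsBased (obs' obs₁) σ ∧
        (⨅ π : List (S' S n) → PMF A₂, Pr' (Sum.inl s) σ π (phi' φ)) =
          ⨆ σ' : {σ' : List (S' S n) → PMF A₁ // ObsBased (obs' obs₁) σ'},
            ⨅ π : List (S' S n) → PMF A₂, Pr' (Sum.inl s) σ'.1 π (phi' φ))) := by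
  apply sup_opt (p := ObsBased obs₁) (q := ObsBased (obs' obs₁))
    (F := fun σ => ⨅ π : List S → PMF A₂, Pr s σ π φ)
    (H := fun σ => ⨅ π : List (S' S n) → PMF A₂, Pr' (Sum.inl s) σ π (phi' φ))
  · intro σ hσ
    refine ⟨toG' (decide (turn s = Turn.prob)) s f hf σ, toG'_obs _ _ _ _ _ _ hσ, ?_⟩
    refine le_iInf fun π' => ?_
    obtain ⟨π, hπ⟩ := dir1 hδ₁ hδ₂ hsucc hf hPr hPr' s rfl σ π' φ hφ
    rw [hπ]
    exact iInf_le _ π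
  · intro σ' hσ'
    refine ⟨fun h => σ' (dup n (decide (turn s = Turn.prob)) s h),
      fun h h' hh => hσ' _ _ (dup_obs n _ s obs₁ hh), ?_⟩
    refine le_iInf fun π => ?_
    obtain ⟨π', hπ⟩ := dir2 obs₁ hδ₁ hδ₂ hsucc hg hPr hPr' s rfl σ' hσ' π φ hφ
    rw [← hπ]
    exact iInf_le _ π'


end Stmt5
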